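/- Let R be a commutative ring in which 2 is not a zero divisor. Then a matrix M ∈ M_4(R) is a Suslin matrix (i.e. M = S_2(v,w) for some v, w ∈ R³) if and only if M* = M, where M* = J_2·Mᵀ·J_2ᵀ. -/

import Mathlib

open Matrix

noncomputable section

/-- Reindexing equivalence `Fin (2 ^ n) ⊕ Fin (2 ^ n) ≃ Fin (2 ^ (n + 1))`. -/
def pow2Equiv (n : ℕ) : Fin (2 ^ n) ⊕ Fin (2 ^ n) ≃ Fin (2 ^ (n + 1)) :=
  finSumFinEquiv.trans (finCongr (by rw [pow_succ]; ring))

/-- The Suslin matrix `S_n(v, w)` of size `2 ^ n` associated to `v, w : Fin (n+1) → R`. -/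
def sus (R : Type) [CommRing R] : (n : ℕ) → (Fin (n + 1) → R) → (Fin (n + 1) → R) →
    Matrix (Fin (2 ^ n)) (Fin (2 ^ n)) R
  | 0, v, _ => v 0 • 1
  | n + 1, v, w =>
      Matrix.reindex (pow2Equiv n) (pow2Equiv n)
        (Matrix.fromBlocks (v 0 • 1) (sus R n (v ∘ Fin.succ) (w ∘ Fin.succ))
          (-(sus R n (w ∘ Fin.succ) (v ∘ Fin.succ))ᵀ) (w 0 • 1))

/-- The conjugate Suslin matrix `S̄_n(v, w) = S_n(w, v)ᵀ`. -/
def susBar (R : Type) [CommRing R] (n : ℕ) (v w : Fin (n + 1) → R) :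
    Matrix (Fin (2 ^ n)) (Fin (2 ^ n)) R :=
  (sus R n w v)ᵀ

/-- Suslin's matrices `J_n`. -/
def Jmat (R : Type) [CommRing R] : (n : ℕ) → Matrix (Fin (2 ^ n)) (Fin (2 ^ n)) R
  | 0 => 1
  | n + 1 =>
      if Even (n + 1) then
        Matrix.reindex (pow2Equiv n) (pow2Equiv n)
          (Matrix.fromBlocks (Jmat R n) 0 0 (-(Jmat R n)))
      else
        Matrix.reindex (pow2Equiv n) (pow2Equiv n)
          (Matrix.fromBlocks 0 (Jmat R n) (-(Jmat R n)) 0)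

/-- The involution `M ↦ M* = J_n · Mᵀ · J_nᵀ`. -/
def invol (R : Type) [CommRing R] (n : ℕ) (M : Matrix (Fin (2 ^ n)) (Fin (2 ^ n)) R) :
    Matrix (Fin (2 ^ n)) (Fin (2 ^ n)) R :=
  Jmat R n * Mᵀ * (Jmat R n)ᵀ

/-- `φ(v, w) = [[0, S_n(v,w)], [S̄_n(v,w), 0]]` (note the shift: vectors in `R^{n+1}`,
matrices of size `2 ^ (n + 1)`). -/
def phiMat (R : Type) [CommRing R] (n : ℕ) (v w : Fin (n + 1) → R) :
    Matrix (Fin (2 ^ (n + 1))) (Fin (2 ^ (n + 1))) R :=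
  Matrix.reindex (pow2Equiv n) (pow2Equiv n)
    (Matrix.fromBlocks 0 (sus R n v w) (susBar R n v w) 0)

/-- The set of Suslin matrices of size `2 ^ m`. -/
def SuslinSet (R : Type) [CommRing R] (m : ℕ) : Set (Matrix (Fin (2 ^ m)) (Fin (2 ^ m)) R) :=
  {S | ∃ v w : Fin (m + 1) → R, S = sus R m v w}

/-- The image of the hyperbolic space `R^{m+1} ⊕ R^{m+1}` inside the Clifford algebra
`M_{2^{m+1}}(R)`. -/
def PhiSet (R : Type) [CommRing R] (m : ℕ) :
    Set (Matrix (Fin (2 ^ (m + 1))) (Fin (2 ^ (m + 1))) R) :=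
  {x | ∃ v w : Fin (m + 1) → R, x = phiMat R m v w}

/-- The block diagonal matrix `diag(g₁, g₂)`. -/
def diagBlock (R : Type) [CommRing R] (m : ℕ)
    (g₁ g₂ : Matrix (Fin (2 ^ m)) (Fin (2 ^ m)) R) :
    Matrix (Fin (2 ^ (m + 1))) (Fin (2 ^ (m + 1))) R :=
  Matrix.reindex (pow2Equiv m) (pow2Equiv m) (Matrix.fromBlocks g₁ 0 0 g₂)

/-- `Spin_{2(m+1)}(R)`, as the set of pairs `(g₁, g₂)` such that `x = diag(g₁, g₂)`
satisfies `x · x* = 1` and conjugation by `x` maps the image of the hyperbolic space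
onto itself. -/
def SpinPair (R : Type) [CommRing R] (m : ℕ) :
    Set (Matrix (Fin (2 ^ m)) (Fin (2 ^ m)) R × Matrix (Fin (2 ^ m)) (Fin (2 ^ m)) R) :=
  {p | IsUnit p.1 ∧ IsUnit p.2 ∧
    diagBlock R m p.1 p.2 * invol R (m + 1) (diagBlock R m p.1 p.2) = 1 ∧
    (fun y => diagBlock R m p.1 p.2 * y * (diagBlock R m p.1 p.2)⁻¹) '' PhiSet R m
      = PhiSet R m}

/-- The group `G_m(R)` of `g ∈ GL_{2^m}(R)` such that `g · S · g*` is a Suslin matrix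
for every Suslin matrix `S`. -/
def GSet (R : Type) [CommRing R] (m : ℕ) : Set (Matrix (Fin (2 ^ m)) (Fin (2 ^ m)) R) :=
  {g | IsUnit g ∧ ∀ S ∈ SuslinSet R m, g * S * invol R m g ∈ SuslinSet R m}

/-- The group `SG_m(R)` of `g ∈ G_m(R)` preserving the length `l(S(v,w)) = v ⬝ᵥ w`. -/
def SGSet (R : Type) [CommRing R] (m : ℕ) : Set (Matrix (Fin (2 ^ m)) (Fin (2 ^ m)) R) :=
  {g | g ∈ GSet R m ∧ ∀ v w v' w' : Fin (m + 1) → R,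
    g * sus R m v w * invol R m g = sus R m v' w' → v' ⬝ᵥ w' = v ⬝ᵥ w}

/-- The hyperbolic quadratic form `q(v, w) = v ⬝ᵥ w` on `R^n ⊕ R^n`. -/
def hypForm (R : Type) [CommRing R] (n : ℕ) :
    QuadraticForm R ((Fin n → R) × (Fin n → R)) :=
  LinearMap.BilinMap.toQuadraticMap
    (LinearMap.mk₂ R (fun x y => x.1 ⬝ᵥ y.2)
      (fun x x' y => by simp [add_dotProduct])
      (fun c x y => by simp [smul_dotProduct])
      (fun x y y' => by simp [dotProduct_add])
      (fun x c y => by simp [dotProduct_smul]))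

/-- `E_i = S_m(e_i, 0)`. -/
def Emat (R : Type) [CommRing R] (m : ℕ) (i : Fin (m + 1)) :
    Matrix (Fin (2 ^ m)) (Fin (2 ^ m)) R :=
  sus R m (Pi.single i 1) 0

/-- `F_i = S_m(0, e_i)`. -/
def Fmat (R : Type) [CommRing R] (m : ℕ) (i : Fin (m + 1)) :
    Matrix (Fin (2 ^ m)) (Fin (2 ^ m)) R :=
  sus R m 0 (Pi.single i 1)


theorem pow2Equiv_inl (n : ℕ) (i : Fin (2 ^ n)) (k : Fin (2 ^ (n + 1))) (h : k.val = i.val) :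
    (pow2Equiv n).symm k = Sum.inl i := by
  rw [Equiv.symm_apply_eq]
  apply Fin.ext
  simp [pow2Equiv, h]

theorem pow2Equiv_inr (n : ℕ) (i : Fin (2 ^ n)) (k : Fin (2 ^ (n + 1)))
    (h : k.val = 2 ^ n + i.val) :
    (pow2Equiv n).symm k = Sum.inr i := by
  rw [Equiv.symm_apply_eq]
  apply Fin.ext
  simp [pow2Equiv, h, add_comm]

theorem p0_0 : (pow2Equiv 0).symm (0 : Fin 2) = Sum.inl (0 : Fin 1) := pow2Equiv_inl 0 _ _ rfl
theorem p0_1 : (pow2Equiv 0).symm (1 : Fin 2) = Sum.inr (0 : Fin 1) := pow2Equiv_inr 0 _ _ rfl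
theorem p1_0 : (pow2Equiv 1).symm (0 : Fin 4) = Sum.inl (0 : Fin 2) := pow2Equiv_inl 1 _ _ rfl
theorem p1_1 : (pow2Equiv 1).symm (1 : Fin 4) = Sum.inl (1 : Fin 2) := pow2Equiv_inl 1 _ _ rfl
theorem p1_2 : (pow2Equiv 1).symm (2 : Fin 4) = Sum.inr (0 : Fin 2) := pow2Equiv_inr 1 _ _ rfl
theorem p1_3 : (pow2Equiv 1).symm (3 : Fin 4) = Sum.inr (1 : Fin 2) := pow2Equiv_inr 1 _ _ rfl

theorem reindex_one {R : Type} (A B C D : Matrix (Fin 1) (Fin 1) R) :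
    Matrix.reindex (pow2Equiv 0) (pow2Equiv 0) (Matrix.fromBlocks A B C D) =
      (!![A 0 0, B 0 0; C 0 0, D 0 0] : Matrix (Fin 2) (Fin 2) R) := by
  ext i j
  change Matrix.fromBlocks A B C D ((pow2Equiv 0).symm i) ((pow2Equiv 0).symm j) = _
  change Fin 2 at i j
  fin_cases i <;> fin_cases j <;>
    simp only [Fin.zero_eta, Fin.mk_one, p0_0, p0_1] <;> rfl

theorem reindex_two {R : Type} (A B C D : Matrix (Fin 2) (Fin 2) R) :
    Matrix.reindex (pow2Equiv 1) (pow2Equiv 1) (Matrix.fromBlocks A B C D) =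
      (!![A 0 0, A 0 1, B 0 0, B 0 1; A 1 0, A 1 1, B 1 0, B 1 1;
        C 0 0, C 0 1, D 0 0, D 0 1; C 1 0, C 1 1, D 1 0, D 1 1] : Matrix (Fin 4) (Fin 4) R) := by
  ext i j
  change Matrix.fromBlocks A B C D ((pow2Equiv 1).symm i) ((pow2Equiv 1).symm j) = _
  change Fin 4 at i j
  fin_cases i <;> fin_cases j <;>
    simp only [Fin.zero_eta, Fin.mk_one, Fin.reduceFinMk, p1_0, p1_1, p1_2, p1_3] <;> rfl

theorem sus_one (R : Type) [CommRing R] (v w : Fin 2 → R) :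
    sus R 1 v w = (!![v 0, v 1; -w 1, w 0] : Matrix (Fin 2) (Fin 2) R) := by
  refine (reindex_one _ _ _ _).trans ?_
  simp [sus]

theorem sus_two (R : Type) [CommRing R] (v w : Fin 3 → R) :
    sus R 2 v w = (!![v 0, 0, v 1, v 2; 0, v 0, -w 2, w 1;
      -w 1, v 2, w 0, 0; -w 2, -v 1, 0, w 0] : Matrix (Fin 4) (Fin 4) R) := by
  refine (reindex_two _ _ _ _).trans ?_
  rw [sus_one, sus_one]
  simp

theorem Jmat_one (R : Type) [CommRing R] :
    Jmat R 1 = (!![0, 1; -1, 0] : Matrix (Fin 2) (Fin 2) R) := by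
  rw [Jmat, if_neg (by decide)]
  refine (reindex_one _ _ _ _).trans ?_
  simp [Jmat]

theorem Jmat_two (R : Type) [CommRing R] :
    Jmat R 2 = (!![0, 1, 0, 0; -1, 0, 0, 0; 0, 0, 0, -1; 0, 0, 1, 0] :
      Matrix (Fin 4) (Fin 4) R) := by
  rw [Jmat, if_pos (by decide)]
  refine (reindex_two _ _ _ _).trans ?_
  rw [Jmat_one]
  simp

theorem invol_two (R : Type) [CommRing R] (M : Matrix (Fin 4) (Fin 4) R) :
    invol R 2 M = (!![M 1 1, -M 0 1, -M 3 1, M 2 1; -M 1 0, M 0 0, M 3 0, -M 2 0;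
      -M 1 3, M 0 3, M 3 3, -M 2 3; M 1 2, -M 0 2, -M 3 2, M 2 2] :
      Matrix (Fin 4) (Fin 4) R) := by
  rw [invol, Jmat_two]
  change ((_ : Matrix (Fin 4) (Fin 4) R) * Mᵀ * _ : Matrix (Fin 4) (Fin 4) R) = _
  ext i j
  fin_cases i <;> fin_cases j <;> simp [Matrix.mul_apply, Matrix.vecMul, dotProduct, Fin.sum_univ_four]

/-- if `2` is not a zero divisor in `R`, then `M ∈ M_4(R)` is a Suslin matrix
iff `M* = M`. -/
theorem suslin_iff_selfadjoint (R : Type) [CommRing R]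
    (h2 : ∀ r : R, 2 * r = 0 → r = 0)
    (M : Matrix (Fin (2 ^ 2)) (Fin (2 ^ 2)) R) :
    (∃ v w : Fin 3 → R, M = sus R 2 v w) ↔ invol R 2 M = M := by
  change Matrix (Fin 4) (Fin 4) R at M
  constructor
  · rintro ⟨v, w, h⟩
    rw [sus_two] at h
    rw [invol_two, h]
    simp
  · intro h
    rw [invol_two] at h
    have e : ∀ i j : Fin 4, _ = M i j := fun i j => congrFun (congrFun h i) j
    have e00 : M 1 1 = M 0 0 := e 0 0
    have e01 : -M 0 1 = M 0 1 := e 0 1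
    have e02 : -M 3 1 = M 0 2 := e 0 2
    have e03 : M 2 1 = M 0 3 := e 0 3
    have e10 : -M 1 0 = M 1 0 := e 1 0
    have e12 : M 3 0 = M 1 2 := e 1 2
    have e13 : -M 2 0 = M 1 3 := e 1 3
    have e22 : M 3 3 = M 2 2 := e 2 2
    have e23 : -M 2 3 = M 2 3 := e 2 3
    have e32 : -M 3 2 = M 3 2 := e 3 2
    have key : ∀ r : R, -r = r → r = 0 := fun r hr => h2 r (by linear_combination -hr)
    refine ⟨![M 0 0, M 0 2, M 0 3], ![M 2 2, M 1 3, -M 1 2], ?_⟩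
    rw [sus_two]
    ext i j
    change Fin 4 at i j
    fin_cases i <;> fin_cases j <;>
      simp [key _ e01, key _ e10, key _ e23, key _ e32, e00, ← e02, e03, e12, ← e13, e22]
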